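/- Let K be a compact Hausdorff space with a retractional skeleton. Then: (i) every subset of K which is the closure of an arbitrary union of Gδ subsets of K has a retractional skeleton (as a compact space with the subspace topology); (ii) every set of the form G = ⋂_{n∈ℕ} cl(U_n), with each U_n open in K and cl denoting closure in K, has a retractional skeleton. -/

import Mathlib

/-!
Let `D = ⋃ s, r s [K]`. If `F` is closed, then those `r s` that map `F` into itself restrict to a
skeleton on `F` as soon as their indices are cofinal, because these indices are closed under suprema
of increasing sequences.

Cofinality holds when `F ∩ D` is dense in `F`. As `r s [K]` is compact metrizable, some countable
`C ⊆ F ∩ D` has `r s [C]` dense in `r s [F]`, and `C` is contained in `r t [K]` for all large `t`.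
Hence `r s [F] = r s [F ∩ r t [K]]` for all large `t`. Iterating produces an increasing sequence of
indices with supremum `t`, and by compactness every `x ∈ F` has a companion `y ∈ F ∩ r t [K]` with
the same image as `x` under each retraction of the sequence. Therefore `r t x = r t y = y ∈ F`. The
same closing-off argument serves countably many sets `F i` at once, and so it applies to `⋂ i, F i`.

Finally `D` is dense in every Gδ set `G`: countable sets of indices are bounded above, so for
`x ∈ G` the net `r s x ∈ D` converges to `x` and is eventually in `G`.
-/

open Filter Topology TopologicalSpace Set

universe u v

/-- A retractional skeleton in a topological space `K`: a family `r s : C(K, K)` of continuous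
retractions indexed by an up-directed (nonempty) partially ordered set `Γ` such that
(i) each `r s` has metrizable range and the net `(r s x)` converges to `x`;
(ii) `s ≤ t` implies `r s ∘ r t = r t ∘ r s = r s`;
(iii) each strictly increasing sequence has a supremum `t` and `r t x = lim_n r (f n) x`. -/
structure RetractionalSkeleton (K : Type u) [TopologicalSpace K] : Type (u + 1) where
  Γ : Type u
  [po : PartialOrder Γ]
  [ne : Nonempty Γ]
  directed : ∀ s t : Γ, ∃ w, s ≤ w ∧ t ≤ w
  r : Γ → C(K, K)
  isRetraction : ∀ s, ∀ x : K, r s (r s x) = r s x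
  metrizable : ∀ s, MetrizableSpace ↥(Set.range (r s))
  tendsto_id : ∀ x : K, Tendsto (fun s => r s x) atTop (𝓝 x)
  comp_eq_of_le : ∀ s t : Γ, s ≤ t → ∀ x : K, r s (r t x) = r s x ∧ r t (r s x) = r s x
  sup_seq : ∀ f : ℕ → Γ, StrictMono f → ∃ t : Γ, IsLUB (Set.range f) t ∧
    ∀ x : K, Tendsto (fun n => r (f n) x) atTop (𝓝 (r t x))

/-- The set `D(𝔰) = ⋃ s, r s [K]` induced by a retractional skeleton. -/
def RetractionalSkeleton.inducedSet {K : Type u} [TopologicalSpace K]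
    (𝔰 : RetractionalSkeleton K) : Set K := ⋃ s, Set.range (𝔰.r s)

/-- `D` is induced by an r-skeleton in `K`. -/
def IsInducedByRSkeleton {K : Type u} [TopologicalSpace K] (D : Set K) : Prop :=
  ∃ 𝔰 : RetractionalSkeleton K, 𝔰.inducedSet = D

/-- `K` has a retractional skeleton. -/
def HasRetractionalSkeleton (K : Type u) [TopologicalSpace K] : Prop :=
  Nonempty (RetractionalSkeleton K)

theorem exists_monotone_forall_le {α : Type*} [Preorder α] [IsDirectedOrder α] (g : ℕ → α) :
    ∃ f : ℕ → α, Monotone f ∧ ∀ n, g n ≤ f n := by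
  choose ub le_ub_left le_ub_right using exists_ge_ge (α := α)
  let f : ℕ → α := fun n ↦ Nat.rec (g 0) (fun k a ↦ ub a (g (k + 1))) n
  refine ⟨f, monotone_nat_of_le_succ fun n ↦ le_ub_left _ _, fun n ↦ ?_⟩
  cases n with
  | zero => exact le_rfl
  | succ k => exact le_ub_right _ _

theorem exists_strictMono_comp_or_const {α : Type*} [PartialOrder α] {f : ℕ → α}
    (hf : Monotone f) :
    ∃ φ : ℕ → ℕ, StrictMono φ ∧ (StrictMono (f ∘ φ) ∨ ∃ a, ∀ n, f (φ n) = a) := by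
  obtain ⟨φ, hφ | hφ⟩ := exists_increasing_or_nonincreasing_subseq (· < ·) f
  · exact ⟨φ, φ.strictMono, .inl fun m n ↦ hφ m n⟩
  · refine ⟨φ, φ.strictMono, .inr ⟨f (φ 0), fun n ↦ ?_⟩⟩
    have hle : f (φ 0) ≤ f (φ n) := hf (φ.monotone n.zero_le)
    rcases n.eq_zero_or_pos with rfl | hn
    · rfl
    · exact (hle.eq_or_lt.resolve_right (hφ 0 n hn)).symm

theorem exists_countable_subset_image_subset_closure {X Y : Type*} [TopologicalSpace Y]
    (f : X → Y) (A : Set X) [SeparableSpace (f '' A)] :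
    ∃ C ⊆ A, C.Countable ∧ f '' A ⊆ closure (f '' C) := by
  obtain ⟨B, hB, hBd⟩ := exists_countable_dense (f '' A)
  have hsurj : SurjOn f A (Subtype.val '' B) := Subtype.coe_image_subset _ _
  obtain ⟨C, hCA, hinj, hC⟩ := hsurj.exists_subset_injOn_image_eq
  refine ⟨C, hCA, countable_of_injective_of_countable_image hinj ?_, ?_⟩
  · rw [hC]
    exact hB.image _
  · rw [hC]
    exact Subtype.dense_iff.1 hBd

theorem metrizableSpace_range_restrict {X Y : Type*} [TopologicalSpace Y] {f : X → Y}
    [MetrizableSpace (range f)] {S : Set X} {T : Set Y} (h : MapsTo f S T) :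
    MetrizableSpace (range (h.restrict f S T)) := by
  let e : range (h.restrict f S T) → range f := fun y ↦
    ⟨y.1.1, by obtain ⟨_, x, rfl⟩ := y; exact ⟨x, rfl⟩⟩
  have hval : IsEmbedding fun y : range (h.restrict f S T) ↦ y.1.1 :=
    IsEmbedding.subtypeVal.comp IsEmbedding.subtypeVal
  have he : IsEmbedding e := .of_comp (by fun_prop) continuous_subtype_val hval
  exact he.metrizableSpace

namespace RetractionalSkeleton

variable {K : Type u} [TopologicalSpace K] (𝔰 : RetractionalSkeleton K)

attribute [instance] po ne metrizable

instance isDirectedOrder : IsDirectedOrder 𝔰.Γ := ⟨𝔰.directed⟩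

theorem mem_range_iff {s : 𝔰.Γ} {x : K} : x ∈ range (𝔰.r s) ↔ 𝔰.r s x = x :=
  ⟨by rintro ⟨y, rfl⟩; exact 𝔰.isRetraction s y, fun h ↦ ⟨x, h⟩⟩

theorem monotone_range : Monotone fun s ↦ range (𝔰.r s) := by
  rintro s t hst _ ⟨x, rfl⟩
  exact 𝔰.mem_range_iff.2 (𝔰.comp_eq_of_le s t hst x).2

theorem apply_eq_apply_of_le {s t : 𝔰.Γ} (hst : s ≤ t) {x y : K} (h : 𝔰.r t x = 𝔰.r t y) :
    𝔰.r s x = 𝔰.r s y := by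
  rw [← (𝔰.comp_eq_of_le s t hst x).1, h, (𝔰.comp_eq_of_le s t hst y).1]

theorem exists_isLUB_tendsto_subseq {f : ℕ → 𝔰.Γ} (hf : Monotone f) :
    ∃ t, IsLUB (range f) t ∧ ∃ φ : ℕ → ℕ, StrictMono φ ∧
      ∀ x, Tendsto (fun n ↦ 𝔰.r (f (φ n)) x) atTop (𝓝 (𝔰.r t x)) := by
  obtain ⟨φ, hφ, hfφ⟩ := exists_strictMono_comp_or_const hf
  suffices ∃ t, IsLUB (range (f ∘ φ)) t ∧
      ∀ x, Tendsto (fun n ↦ 𝔰.r (f (φ n)) x) atTop (𝓝 (𝔰.r t x)) by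
    obtain ⟨t, ht, hlim⟩ := this
    have hub := hf.upperBounds_range_comp_tendsto_atTop hφ.tendsto_atTop
    exact ⟨t, (isLUB_congr hub).1 ht, φ, hφ, hlim⟩
  rcases hfφ with hstrict | ⟨a, ha⟩
  · exact 𝔰.sup_seq _ hstrict
  · have hconst : f ∘ φ = fun _ ↦ a := funext ha
    refine ⟨a, ?_, fun x ↦ ?_⟩
    · rw [hconst, range_const]
      exact isLUB_singleton
    · simp only [ha, tendsto_const_nhds]

theorem apply_eq_apply_of_isLUB [T2Space K] {f : ℕ → 𝔰.Γ} (hf : Monotone f) {t : 𝔰.Γ}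
    (ht : IsLUB (range f) t) {x y : K} (h : ∀ n, 𝔰.r (f n) x = 𝔰.r (f n) y) :
    𝔰.r t x = 𝔰.r t y := by
  obtain ⟨t', ht', φ, -, hlim⟩ := 𝔰.exists_isLUB_tendsto_subseq hf
  obtain rfl := ht.unique ht'
  exact tendsto_nhds_unique (hlim x) ((hlim y).congr fun n ↦ (h (φ n)).symm)

theorem bddAbove_of_countable {A : Set 𝔰.Γ} (hA : A.Countable) : BddAbove A := by
  rcases A.eq_empty_or_nonempty with rfl | hne
  · exact bddAbove_empty
  obtain ⟨g, rfl⟩ := hA.exists_eq_range hne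
  obtain ⟨f, hf, hgf⟩ := exists_monotone_forall_le g
  obtain ⟨t, ht, -⟩ := 𝔰.exists_isLUB_tendsto_subseq hf
  exact ⟨t, forall_mem_range.2 fun n ↦ (hgf n).trans (ht.1 (mem_range_self n))⟩

instance countableInterFilter_atTop : CountableInterFilter (atTop : Filter 𝔰.Γ) where
  countable_sInter_mem S hS h := by
    have := hS.to_subtype
    choose a ha using fun A : S ↦ mem_atTop_sets.1 (h A A.2)
    obtain ⟨t, ht⟩ := 𝔰.bddAbove_of_countable (countable_range a)
    refine mem_atTop_sets.2 ⟨t, fun s hs A hA ↦ ha ⟨A, hA⟩ s ?_⟩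
    exact (ht (mem_range_self _)).trans hs

theorem mem_inducedSet_iff_eventually {x : K} :
    x ∈ 𝔰.inducedSet ↔ ∀ᶠ s in atTop, x ∈ range (𝔰.r s) := by
  refine mem_iUnion.trans ⟨?_, Eventually.exists⟩
  rintro ⟨s, hs⟩
  filter_upwards [eventually_ge_atTop s] with t hst using 𝔰.monotone_range hst hs

theorem eventually_subset_range {C : Set K} (hC : C.Countable) (hCD : C ⊆ 𝔰.inducedSet) :
    ∀ᶠ s in atTop, C ⊆ range (𝔰.r s) :=
  (eventually_countable_ball hC).2 fun _ hx ↦ 𝔰.mem_inducedSet_iff_eventually.1 (hCD hx)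

theorem eventually_mem_of_isGδ {G : Set K} (hG : IsGδ G) {x : K} (hx : x ∈ G) :
    ∀ᶠ s in atTop, 𝔰.r s x ∈ G := by
  obtain ⟨𝒱, hopen, hcount, rfl⟩ := hG
  exact (eventually_countable_ball hcount).2 fun V hV ↦
    (𝔰.tendsto_id x).eventually_mem ((hopen V hV).mem_nhds (hx V hV))

theorem subset_closure_inter_inducedSet {G : Set K} (hG : IsGδ G) :
    G ⊆ closure (G ∩ 𝔰.inducedSet) := fun x hx ↦
  mem_closure_of_tendsto (𝔰.tendsto_id x) <| (𝔰.eventually_mem_of_isGδ hG hx).mono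
    fun s hs ↦ ⟨hs, mem_iUnion.2 ⟨s, mem_range_self x⟩⟩

theorem closure_iUnion_subset_closure_inter_inducedSet {ι : Sort*} {G : ι → Set K}
    (hG : ∀ i, IsGδ (G i)) :
    closure (⋃ i, G i) ⊆ closure (closure (⋃ i, G i) ∩ 𝔰.inducedSet) := by
  refine closure_minimal (iUnion_subset fun i ↦ ?_) isClosed_closure
  calc
    G i ⊆ closure (G i ∩ 𝔰.inducedSet) := 𝔰.subset_closure_inter_inducedSet (hG i)
    _ ⊆ closure (closure (⋃ i, G i) ∩ 𝔰.inducedSet) := by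
      gcongr
      exact (subset_iUnion G i).trans subset_closure

/-- The skeleton on a closed set `S` formed by restricting those retractions that map `S` into
itself, provided that their indices are cofinal. -/
def restrict {S : Set K} (hS : IsClosed S) (hcof : IsCofinal {s | MapsTo (𝔰.r s) S S}) :
    RetractionalSkeleton S where
  Γ := {s : 𝔰.Γ // MapsTo (𝔰.r s) S S}
  ne := hcof.nonempty.to_subtype
  directed s t := by
    obtain ⟨w, hsw, htw⟩ := 𝔰.directed s t
    obtain ⟨w', hw', hww'⟩ := hcof w
    exact ⟨⟨w', hw'⟩, hsw.trans hww', htw.trans hww'⟩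
  r s := ⟨s.2.restrict (𝔰.r s) S S, (𝔰.r s).continuous.restrict s.2⟩
  isRetraction s x := Subtype.ext (𝔰.isRetraction s x)
  metrizable s := metrizableSpace_range_restrict s.2
  tendsto_id x := by
    rw [tendsto_subtype_rng]
    refine (𝔰.tendsto_id x).comp
      (tendsto_atTop_atTop_of_monotone (Subtype.mono_coe _) fun s ↦ ?_)
    obtain ⟨t, ht, hst⟩ := hcof s
    exact ⟨⟨t, ht⟩, hst⟩
  comp_eq_of_le s t hst x :=
    ⟨Subtype.ext (𝔰.comp_eq_of_le s t hst x).1, Subtype.ext (𝔰.comp_eq_of_le s t hst x).2⟩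
  sup_seq f hf := by
    obtain ⟨t, ht, hlim⟩ := 𝔰.sup_seq (fun n ↦ (f n).1) fun _ _ h ↦ hf h
    have htS : MapsTo (𝔰.r t) S S := fun x hx ↦
      hS.mem_of_tendsto (hlim x) (.of_forall fun n ↦ (f n).2 hx)
    refine ⟨⟨t, htS⟩, ⟨?_, fun b hb ↦ ht.2 ?_⟩, fun x ↦ tendsto_subtype_rng.2 (hlim x)⟩
    · exact forall_mem_range.2 fun n ↦ ht.1 (mem_range_self n)
    · exact forall_mem_range.2 fun n ↦ hb (mem_range_self n)

section Compact

variable [CompactSpace K]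

instance secondCountableTopology_range (s : 𝔰.Γ) : SecondCountableTopology (range (𝔰.r s)) := by
  have := isCompact_iff_compactSpace.1 (isCompact_range (𝔰.r s).continuous)
  let _ := metrizableSpaceMetric (range (𝔰.r s))
  infer_instance

theorem exists_countable_image_subset_closure (s : 𝔰.Γ) (A : Set K) :
    ∃ C ⊆ A, C.Countable ∧ 𝔰.r s '' A ⊆ closure (𝔰.r s '' C) := by
  have := (IsEmbedding.inclusion (image_subset_range (𝔰.r s) A)).secondCountableTopology
  exact exists_countable_subset_image_subset_closure (𝔰.r s) A

variable [T2Space K]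

theorem eventually_image_subset {F : Set K} (hF : IsClosed F)
    (hFD : F ⊆ closure (F ∩ 𝔰.inducedSet)) (s : 𝔰.Γ) :
    ∀ᶠ t in atTop, 𝔰.r s '' F ⊆ 𝔰.r s '' (F ∩ range (𝔰.r t)) := by
  obtain ⟨C, hCF, hC, hdense⟩ := 𝔰.exists_countable_image_subset_closure s (F ∩ 𝔰.inducedSet)
  filter_upwards [𝔰.eventually_subset_range hC (hCF.trans inter_subset_right)] with t hCt
  have hclosed : IsClosed (𝔰.r s '' (F ∩ range (𝔰.r t))) :=
    (hF.isCompact.inter (isCompact_range (𝔰.r t).continuous)).image (𝔰.r s).continuous |>.isClosed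
  calc
    𝔰.r s '' F ⊆ 𝔰.r s '' closure (F ∩ 𝔰.inducedSet) := image_mono hFD
    _ ⊆ closure (𝔰.r s '' (F ∩ 𝔰.inducedSet)) :=
      image_closure_subset_closure_image (𝔰.r s).continuous
    _ ⊆ closure (𝔰.r s '' C) := closure_minimal hdense isClosed_closure
    _ ⊆ 𝔰.r s '' (F ∩ range (𝔰.r t)) := closure_minimal
      (image_mono (subset_inter (hCF.trans inter_subset_left) hCt)) hclosed

theorem mapsTo_of_isLUB {f : ℕ → 𝔰.Γ} (hf : Monotone f) {t : 𝔰.Γ} (ht : IsLUB (range f) t)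
    {F : Set K} (hF : IsClosed F)
    (himage : ∀ n, 𝔰.r (f n) '' F ⊆ 𝔰.r (f n) '' (F ∩ range (𝔰.r t))) :
    MapsTo (𝔰.r t) F F := by
  intro x hx
  let Z : ℕ → Set K := fun n ↦ (F ∩ range (𝔰.r t)) ∩ 𝔰.r (f n) ⁻¹' {𝔰.r (f n) x}
  have hZ : ∀ n, IsClosed (Z n) := fun n ↦
    (hF.inter (isCompact_range (𝔰.r t).continuous).isClosed).inter
      (isClosed_singleton.preimage (𝔰.r (f n)).continuous)
  obtain ⟨y, hy⟩ : (⋂ n, Z n).Nonempty := by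
    refine IsCompact.nonempty_iInter_of_sequence_nonempty_isCompact_isClosed Z (fun n y hy ↦ ?_)
      (fun n ↦ himage n ⟨x, hx, rfl⟩) (hZ 0).isCompact hZ
    exact ⟨hy.1, 𝔰.apply_eq_apply_of_le (hf n.le_succ) hy.2⟩
  rw [mem_iInter] at hy
  have hyx : 𝔰.r t y = 𝔰.r t x := 𝔰.apply_eq_apply_of_isLUB hf ht fun n ↦ (hy n).2
  rw [← hyx, 𝔰.mem_range_iff.1 (hy 0).1.2]
  exact (hy 0).1.1

theorem isCofinal_mapsTo {ι : Sort*} [Countable ι] {F : ι → Set K} (hF : ∀ i, IsClosed (F i))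
    (hFD : ∀ i, F i ⊆ closure (F i ∩ 𝔰.inducedSet)) :
    IsCofinal {s | ∀ i, MapsTo (𝔰.r s) (F i) (F i)} := by
  have hstep : ∀ s, ∃ t ≥ s, ∀ i, 𝔰.r s '' F i ⊆ 𝔰.r s '' (F i ∩ range (𝔰.r t)) := fun s ↦
    ((eventually_ge_atTop s).and <|
      eventually_countable_forall.2 fun i ↦ 𝔰.eventually_image_subset (hF i) (hFD i) s).exists
  choose next le_next himage using hstep
  intro s
  let f : ℕ → 𝔰.Γ := fun n ↦ next^[n] s
  have hf_succ : ∀ n, f (n + 1) = next (f n) := fun n ↦ Function.iterate_succ_apply' next n s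
  have hf : Monotone f := monotone_nat_of_le_succ fun n ↦ hf_succ n ▸ le_next (f n)
  obtain ⟨t, ht, -⟩ := 𝔰.exists_isLUB_tendsto_subseq hf
  refine ⟨t, fun i ↦ 𝔰.mapsTo_of_isLUB hf ht (hF i) fun n ↦ ?_, ht.1 ⟨0, rfl⟩⟩
  have hnext_le : next (f n) ≤ t := ht.1 ⟨n + 1, hf_succ n⟩
  exact (himage (f n) i).trans (image_mono (inter_subset_inter_right _ (𝔰.monotone_range hnext_le)))

theorem hasRetractionalSkeleton_iInter {ι : Sort*} [Countable ι] {F : ι → Set K}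
    (hF : ∀ i, IsClosed (F i)) (hFD : ∀ i, F i ⊆ closure (F i ∩ 𝔰.inducedSet)) :
    HasRetractionalSkeleton ↥(⋂ i, F i) :=
  ⟨𝔰.restrict (isClosed_iInter hF) <| (𝔰.isCofinal_mapsTo hF hFD).mono
    fun _ hs ↦ mapsTo_iInter_iInter hs⟩

end Compact

end RetractionalSkeleton

theorem hasRetractionalSkeleton_hereditary_general {K : Type u} [TopologicalSpace K]
    [CompactSpace K] [T2Space K] (hK : HasRetractionalSkeleton K) {κ : Sort*} [Countable κ]
    {ι : κ → Sort*} {G : ∀ k, ι k → Set K} (hG : ∀ k i, IsGδ (G k i)) :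
    HasRetractionalSkeleton ↥(⋂ k, closure (⋃ i, G k i)) := by
  obtain ⟨𝔰⟩ := hK
  exact 𝔰.hasRetractionalSkeleton_iInter (fun _ ↦ isClosed_closure)
    fun k ↦ 𝔰.closure_iUnion_subset_closure_inter_inducedSet (hG k)

/-- Let `K` be a compact Hausdorff space with a retractional skeleton. Then (i) the closure
of any union of Gδ subsets of `K` has a retractional skeleton, and (ii) any set of the form
`⋂ n, closure (U n)` with each `U n` open has a retractional skeleton. -/
theorem hasRetractionalSkeleton_hereditary (K : Type u) [TopologicalSpace K]
    [CompactSpace K] [T2Space K] (hK : HasRetractionalSkeleton K) :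
    (∀ (ι : Type u) (G : ι → Set K), (∀ i, IsGδ (G i)) →
      HasRetractionalSkeleton ↥(closure (⋃ i, G i))) ∧
    (∀ U : ℕ → Set K, (∀ n, IsOpen (U n)) →
      HasRetractionalSkeleton ↥(⋂ n, closure (U n))) := by
  refine ⟨fun ι G hG ↦ ?_, fun U hU ↦ ?_⟩
  · rw [← iInter_const (ι := Unit) (closure _)]
    exact hasRetractionalSkeleton_hereditary_general hK fun _ ↦ hG
  · rw [← iInter_congr fun n ↦ congrArg closure (iUnion_const (ι := Unit) (U n))]
    exact hasRetractionalSkeleton_hereditary_general hK fun n _ ↦ (hU n).isGδ
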